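/- arXiv:2508.07936 — 2 statements merged into one kernel-verified Lean document; each statement's English description precedes it below -/
import Mathlib

section
/- For μ-almost every ω, as n → ∞: (1/n) Σ_{k=0}^{n−1} Y_k(ω)² → θ²h² + σ²h + γ²h^{2H}; (1/n) Σ_{k=0}^{n−1} Y_k(ω) Y_{k+1}(ω) → θ²h² + γ²h^{2H}(2^{2H−1} − 1); and (1/n) Σ_{k=0}^{n−1} (Y_k(ω) + Y_{k+1}(ω))(Y_{k+2}(ω) + Y_{k+3}(ω)) → 4θ²h² + γ²h^{2H}·2^{2H}(2^{2H−1} − 1). -/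
open MeasureTheory Filter Set Finset

noncomputable def rhoH (H : ℝ) (k : ℤ) : ℝ :=
  (|(k : ℝ) + 1| ^ (2 * H) + |(k : ℝ) - 1| ^ (2 * H) - 2 * |(k : ℝ)| ^ (2 * H)) / 2

noncomputable def mixedCov (σ γ h H : ℝ) (k : ℤ) : ℝ :=
  σ ^ 2 * h * (if k = 0 then 1 else 0) + γ ^ 2 * h ^ (2 * H) * rhoH H k

def shift : (ℕ → ℝ) → (ℕ → ℝ) := fun ω k => ω (k + 1)

/-!
By polarization, every lag product `Y_{k+a} Y_{k+b}` is a combination of squares of Gaussian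
variables, so it is enough to prove a strong law for the squares of a Gaussian sequence. For a
Gaussian pair, `cov(U², V²) = 4 E[U] E[V] cov(U, V) + 2 cov(U, V)²`, hence the variance of the
`n`-th partial sum of squares is at most a constant times `∑_{i,j<n} |c(i - j)|`. For the mixed
fractional covariance this double sum telescopes to `O(n^{2H})`, with `2H < 2`. Consequently the
averages converge almost surely along each sequence `⌊q^i⌋`, `q > 1`, and since the squares are
nonnegative their partial sums are monotone, which fills the gaps.
-/

open ProbabilityTheory Asymptotics
open scoped Topology ENNReal NNReal

section StrongLaw

variable {Ω : Type*} [MeasurableSpace Ω] {μ : Measure Ω}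

lemma ae_tendsto_sub_integral_of_summable_variance [IsFiniteMeasure μ] {X : ℕ → Ω → ℝ}
    (hX : ∀ i, MemLp (X i) 2 μ) (hsum : Summable fun i => Var[X i; μ]) :
    ∀ᵐ ω ∂μ, Tendsto (fun i => X i ω - μ[X i]) atTop (𝓝 0) := by
  have hmeas (i : ℕ) : AEMeasurable (fun ω => ‖X i ω - μ[X i]‖ₑ ^ 2) μ :=
    (((hX i).aestronglyMeasurable.sub aestronglyMeasurable_const).enorm).pow_const 2
  have hfinite : ∫⁻ ω, ∑' i, ‖X i ω - μ[X i]‖ₑ ^ 2 ∂μ ≠ ∞ := by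
    rw [lintegral_tsum hmeas]
    change ∑' i, evariance (X i) μ ≠ ∞
    simp_rw [← ofReal_variance (hX _)]
    exact hsum.tsum_ofReal_ne_top
  filter_upwards [ae_lt_top' (AEMeasurable.tsum hmeas) hfinite] with ω hω
  have hsq := ENNReal.tendsto_atTop_zero_of_tsum_ne_top hω.ne
  have hroot := hsq.ennrpow_const 2⁻¹
  simp only [← ENNReal.rpow_two, ENNReal.rpow_rpow_inv two_ne_zero] at hroot
  rw [tendsto_zero_iff_enorm_tendsto_zero]
  simpa using hroot

lemma summable_natFloor_pow_rpow {c : ℝ} (hc : 1 < c) {q : ℝ} (hq : q < 0) :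
    Summable fun i : ℕ => (⌊c ^ i⌋₊ : ℝ) ^ q := by
  have hc0 : 0 < c := zero_lt_one.trans hc
  have ha : 0 < 1 - c⁻¹ := sub_pos.2 (inv_lt_one_of_one_lt₀ hc)
  have hgeom : Summable fun i : ℕ => (1 - c⁻¹) ^ q * (c ^ q) ^ i :=
    (summable_geometric_of_lt_one (by positivity)
      (Real.rpow_lt_one_of_one_lt_of_neg hc hq)).mul_left _
  refine hgeom.of_nonneg_of_le (fun i => by positivity) fun i => ?_
  calc (⌊c ^ i⌋₊ : ℝ) ^ q ≤ ((1 - c⁻¹) * c ^ i) ^ q :=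
        Real.rpow_le_rpow_of_nonpos (by positivity) (mul_pow_le_nat_floor_pow hc i) hq.le
    _ = (1 - c⁻¹) ^ q * (c ^ q) ^ i := by
        rw [Real.mul_rpow ha.le (by positivity), Real.rpow_pow_comm hc0.le]

variable [IsProbabilityMeasure μ] {Z : ℕ → Ω → ℝ} {m p : ℝ}

lemma ae_tendsto_average_natFloor_pow_of_variance_isBigO (hZ : ∀ k, MemLp (Z k) 2 μ)
    (hm : ∀ k, μ[Z k] = m) (hp : p < 2)
    (hvar : (fun n : ℕ => Var[fun ω => ∑ k ∈ range n, Z k ω; μ]) =O[atTop]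
      fun n : ℕ => (n : ℝ) ^ p) {c : ℝ} (hc : 1 < c) :
    ∀ᵐ ω ∂μ, Tendsto (fun i : ℕ => (∑ k ∈ range ⌊c ^ i⌋₊, Z k ω) / ⌊c ^ i⌋₊) atTop (𝓝 m) := by
  have hN : Tendsto (fun i : ℕ => ⌊c ^ i⌋₊) atTop atTop :=
    tendsto_nat_floor_atTop.comp (tendsto_pow_atTop_atTop_of_one_lt hc)
  have hpos (i : ℕ) : (0 : ℝ) < ⌊c ^ i⌋₊ :=
    Nat.cast_pos.2 (Nat.floor_pos.2 (one_le_pow₀ hc.le))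
  have hLp (n : ℕ) : MemLp (fun ω => (∑ k ∈ range n, Z k ω) / n) 2 μ := by
    simpa only [div_eq_inv_mul] using
      (memLp_finsetSum (range n) fun k _ => hZ k).const_mul (n : ℝ)⁻¹
  have hmean (i : ℕ) : ∫ ω, (∑ k ∈ range ⌊c ^ i⌋₊, Z k ω) / ⌊c ^ i⌋₊ ∂μ = m := by
    rw [integral_div, integral_finsetSum _ fun k _ => (hZ k).integrable one_le_two]
    simp [hm, mul_div_cancel_left₀ m (hpos i).ne']
  have hsum : Summable fun i : ℕ =>
      Var[fun ω => (∑ k ∈ range ⌊c ^ i⌋₊, Z k ω) / ⌊c ^ i⌋₊; μ] := by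
    refine summable_of_isBigO_nat (summable_natFloor_pow_rpow hc (sub_neg.2 hp)) ?_
    have hscaled := (hvar.comp_tendsto hN).mul
      (isBigO_refl (fun i : ℕ => ((⌊c ^ i⌋₊ : ℝ) ^ 2)⁻¹) atTop)
    refine hscaled.congr (fun i => ?_) fun i => ?_
    · simp only [div_eq_mul_inv, variance_mul_const, Function.comp_apply, inv_pow]
    · simp [Real.rpow_sub (hpos i), div_eq_mul_inv]
  filter_upwards [ae_tendsto_sub_integral_of_summable_variance (fun i => hLp _) hsum] with ω hω
  simpa [hmean] using hω.add_const m

lemma ae_tendsto_average_of_variance_isBigO (hZ : ∀ k, MemLp (Z k) 2 μ)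
    (hnonneg : ∀ k ω, 0 ≤ Z k ω) (hm : ∀ k, μ[Z k] = m) (hp : p < 2)
    (hvar : (fun n : ℕ => Var[fun ω => ∑ k ∈ range n, Z k ω; μ]) =O[atTop]
      fun n : ℕ => (n : ℝ) ^ p) :
    ∀ᵐ ω ∂μ, Tendsto (fun n : ℕ => (∑ k ∈ range n, Z k ω) / n) atTop (𝓝 m) := by
  have hratio (j : ℕ) : (1 : ℝ) < 1 + 1 / (j + 1) := lt_add_of_pos_right 1 (by positivity)
  have hratio_tendsto : Tendsto (fun j : ℕ => (1 : ℝ) + 1 / (j + 1)) atTop (𝓝 1) := by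
    simpa using tendsto_one_div_add_atTop_nhds_zero_nat.const_add (1 : ℝ)
  filter_upwards [ae_all_iff.2 fun j : ℕ =>
    ae_tendsto_average_natFloor_pow_of_variance_isBigO hZ hm hp hvar (hratio j)] with ω hω
  exact tendsto_div_of_monotone_of_tendsto_div_floor_pow (fun n => ∑ k ∈ range n, Z k ω) m
    (fun _ _ hab => sum_le_sum_of_subset_of_nonneg (range_mono hab) fun k _ _ => hnonneg k ω)
    _ hratio hratio_tendsto hω

end StrongLaw

section GaussianMoments

lemma hasDerivAt_iteratedDeriv_mgf_id_gaussianReal (m : ℝ) (v : ℝ≥0) (n : ℕ) (t : ℝ) :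
    HasDerivAt (iteratedDeriv n (mgf id (gaussianReal m v)))
      (iteratedDeriv (n + 1) (mgf id (gaussianReal m v)) t) t := by
  have ht : t ∈ interior (integrableExpSet id (gaussianReal m v)) := by simp
  rw [iteratedDeriv_mgf ht]
  exact hasDerivAt_iteratedDeriv_mgf ht n

lemma deriv_mgf_id_gaussianReal (m : ℝ) (v : ℝ≥0) (t : ℝ) :
    deriv (mgf id (gaussianReal m v)) t = (m + v * t) * mgf id (gaussianReal m v) t := by
  have hexponent : HasDerivAt (fun t : ℝ => m * t + v * t ^ 2 / 2) (m + v * t) t :=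
    (((hasDerivAt_id' t).const_mul m).add
      ((((hasDerivAt_id' t).pow 2).const_mul (v : ℝ)).div_const 2)).congr_deriv (by
        simp only [mul_one, Nat.cast_ofNat, Nat.add_one_sub_one, pow_one]
        ring)
  rw [mgf_id_gaussianReal]
  exact hexponent.exp.deriv.trans (mul_comm _ _)

lemma iteratedDeriv_add_two_mgf_id_gaussianReal (m : ℝ) (v : ℝ≥0) (n : ℕ) :
    iteratedDeriv (n + 2) (mgf id (gaussianReal m v)) = fun t =>
      (m + v * t) * iteratedDeriv (n + 1) (mgf id (gaussianReal m v)) t +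
        (n + 1) * v * iteratedDeriv n (mgf id (gaussianReal m v)) t := by
  have hD := hasDerivAt_iteratedDeriv_mgf_id_gaussianReal m v
  have hlinear (t : ℝ) : HasDerivAt (fun t : ℝ => m + v * t) v t := by
    simpa using ((hasDerivAt_id t).const_mul (v : ℝ)).const_add m
  induction n with
  | zero =>
    funext t
    rw [iteratedDeriv_succ, iteratedDeriv_one, funext (deriv_mgf_id_gaussianReal m v)]
    refine ((hlinear t).mul (hD 0 t)).deriv.trans ?_
    simp only [iteratedDeriv_zero, zero_add, iteratedDeriv_one, deriv_mgf_id_gaussianReal,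
      Nat.cast_zero, one_mul]
    ring
  | succ n ih =>
    funext t
    rw [iteratedDeriv_succ, ih]
    refine (((hlinear t).mul (hD (n + 1) t)).add ((hD n t).const_mul _)).deriv.trans ?_
    rw [ih]
    push_cast
    ring

lemma integral_pow_add_two_gaussianReal (m : ℝ) (v : ℝ≥0) (n : ℕ) :
    ∫ x, x ^ (n + 2) ∂gaussianReal m v =
      m * ∫ x, x ^ (n + 1) ∂gaussianReal m v + (n + 1) * v * ∫ x, x ^ n ∂gaussianReal m v := by
  have hmoment (k : ℕ) : iteratedDeriv k (mgf id (gaussianReal m v)) 0 =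
      ∫ x, x ^ k ∂gaussianReal m v :=
    iteratedDeriv_mgf_zero (X := id) (by simp) k
  simpa [hmoment] using congrFun (iteratedDeriv_add_two_mgf_id_gaussianReal m v n) 0

lemma integral_pow_four_gaussianReal (m : ℝ) (v : ℝ≥0) :
    ∫ x, x ^ 4 ∂gaussianReal m v = m ^ 4 + 6 * m ^ 2 * v + 3 * v ^ 2 := by
  simp only [integral_pow_add_two_gaussianReal, zero_add, pow_one, integral_id_gaussianReal,
    Nat.cast_zero, one_mul, pow_zero, integral_const, probReal_univ, smul_eq_mul, mul_one,
    Nat.reduceAdd, Nat.cast_one, Nat.cast_ofNat]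
  ring

variable {Ω : Type*} [MeasurableSpace Ω] {μ : Measure Ω} {X Y : Ω → ℝ}

lemma integral_pow_four_of_hasGaussianLaw (hX : HasGaussianLaw X μ) :
    ∫ ω, X ω ^ 4 ∂μ = μ[X] ^ 4 + 6 * μ[X] ^ 2 * Var[X; μ] + 3 * Var[X; μ] ^ 2 := by
  have h := integral_pow_four_gaussianReal μ[X] Var[X; μ].toNNReal
  rw [← hX.map_eq_gaussianReal, integral_map hX.aemeasurable (by fun_prop),
    Real.coe_toNNReal _ (variance_nonneg X μ)] at h
  exact h

lemma integrable_pow_of_hasGaussianLaw (hX : HasGaussianLaw X μ) (n : ℕ) :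
    Integrable (fun ω => X ω ^ n) μ := by
  have := hX.isProbabilityMeasure
  rw [← integrable_norm_iff (hX.aemeasurable.pow_const n).aestronglyMeasurable]
  simpa using (hX.memLp (ENNReal.natCast_ne_top n)).integrable_norm_pow'

lemma memLp_sq_of_hasGaussianLaw (hX : HasGaussianLaw X μ) :
    MemLp (fun ω => X ω ^ 2) 2 μ := by
  rw [memLp_two_iff_integrable_sq (hX.aemeasurable.pow_const 2).aestronglyMeasurable]
  simpa [← pow_mul] using integrable_pow_of_hasGaussianLaw hX 4

lemma integral_sq_of_hasGaussianLaw (hX : HasGaussianLaw X μ) :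
    ∫ ω, X ω ^ 2 ∂μ = μ[X] ^ 2 + Var[X; μ] := by
  have := hX.isProbabilityMeasure
  simp [variance_eq_sub hX.memLp_two]

lemma integral_sq_mul_sq_of_hasGaussianLaw (h : HasGaussianLaw (fun ω => (X ω, Y ω)) μ) :
    ∫ ω, X ω ^ 2 * Y ω ^ 2 ∂μ = (μ[X] ^ 2 + Var[X; μ]) * (μ[Y] ^ 2 + Var[Y; μ]) +
      4 * μ[X] * μ[Y] * cov[X, Y; μ] + 2 * cov[X, Y; μ] ^ 2 := by
  have := h.isProbabilityMeasure
  have hpolarization (ω : Ω) : X ω ^ 2 * Y ω ^ 2 =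
      ((X + Y) ω ^ 4 + (X - Y) ω ^ 4 - 2 * (X ω ^ 4 + Y ω ^ 4)) / 12 := by
    simp only [Pi.add_apply, Pi.sub_apply]
    ring
  have hadd := integrable_pow_of_hasGaussianLaw h.add 4
  have hsub := integrable_pow_of_hasGaussianLaw h.sub 4
  have hX := integrable_pow_of_hasGaussianLaw h.fst 4
  have hY := integrable_pow_of_hasGaussianLaw h.snd 4
  have hmean_add : μ[X + Y] = μ[X] + μ[Y] := integral_add h.fst.integrable h.snd.integrable
  have hmean_sub : μ[X - Y] = μ[X] - μ[Y] := integral_sub h.fst.integrable h.snd.integrable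
  simp_rw [hpolarization]
  rw [integral_div, integral_sub (hadd.fun_add hsub) ((hX.fun_add hY).const_mul 2),
    integral_add hadd hsub, integral_const_mul, integral_add hX hY,
    integral_pow_four_of_hasGaussianLaw h.add, integral_pow_four_of_hasGaussianLaw h.sub,
    integral_pow_four_of_hasGaussianLaw h.fst, integral_pow_four_of_hasGaussianLaw h.snd,
    hmean_add, hmean_sub,
    variance_add h.fst.memLp_two h.snd.memLp_two, variance_sub h.fst.memLp_two h.snd.memLp_two]
  ring

lemma covariance_sq_sq_of_hasGaussianLaw (h : HasGaussianLaw (fun ω => (X ω, Y ω)) μ) :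
    cov[fun ω => X ω ^ 2, fun ω => Y ω ^ 2; μ] =
      4 * μ[X] * μ[Y] * cov[X, Y; μ] + 2 * cov[X, Y; μ] ^ 2 := by
  have := h.isProbabilityMeasure
  rw [covariance_eq_sub (memLp_sq_of_hasGaussianLaw h.fst) (memLp_sq_of_hasGaussianLaw h.snd),
    integral_sq_of_hasGaussianLaw h.fst, integral_sq_of_hasGaussianLaw h.snd]
  simp only [Pi.mul_apply, integral_sq_mul_sq_of_hasGaussianLaw h]
  ring

end GaussianMoments

section GaussianProcess

variable {Ω : Type*} [MeasurableSpace Ω] {μ : Measure Ω}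

lemma two_mul_abs_covariance_le_add_variance [IsFiniteMeasure μ] {X Y : Ω → ℝ}
    (hX : MemLp X 2 μ) (hY : MemLp Y 2 μ) : 2 * |cov[X, Y; μ]| ≤ Var[X; μ] + Var[Y; μ] := by
  have hadd := variance_add hX hY ▸ variance_nonneg (X + Y) μ
  have hsub := variance_sub hX hY ▸ variance_nonneg (X - Y) μ
  rw [← abs_two, ← abs_mul, abs_le]
  constructor <;> linarith

lemma abs_covariance_sq_sq_le_of_hasGaussianLaw {X Y : Ω → ℝ} {m v : ℝ}
    (h : HasGaussianLaw (fun ω => (X ω, Y ω)) μ) (hmX : μ[X] = m) (hmY : μ[Y] = m)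
    (hvX : Var[X; μ] = v) (hvY : Var[Y; μ] = v) :
    |cov[fun ω => X ω ^ 2, fun ω => Y ω ^ 2; μ]| ≤ (4 * m ^ 2 + 2 * v) * |cov[X, Y; μ]| := by
  have := h.isProbabilityMeasure
  have hcov : 2 * |cov[X, Y; μ]| ≤ 2 * v := by
    linarith [two_mul_abs_covariance_le_add_variance h.fst.memLp_two h.snd.memLp_two]
  rw [covariance_sq_sq_of_hasGaussianLaw h, hmX, hmY]
  calc |4 * m * m * cov[X, Y; μ] + 2 * cov[X, Y; μ] ^ 2|
      = |4 * m ^ 2 + 2 * cov[X, Y; μ]| * |cov[X, Y; μ]| := by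
        rw [← abs_mul]
        ring_nf
    _ ≤ (4 * m ^ 2 + 2 * v) * |cov[X, Y; μ]| := by
        gcongr
        refine (abs_add_le _ _).trans ?_
        rw [abs_mul 2, abs_two, abs_of_nonneg (by positivity)]
        gcongr

variable {X : ℕ → Ω → ℝ} {m v p : ℝ}

lemma variance_sum_sq_le (hX : IsGaussianProcess X μ) (hm : ∀ k, μ[X k] = m)
    (hv : ∀ k, Var[X k; μ] = v) (n : ℕ) :
    Var[fun ω => ∑ k ∈ range n, X k ω ^ 2; μ] ≤
      (4 * m ^ 2 + 2 * v) * ∑ i ∈ range n, ∑ j ∈ range n, |cov[X i, X j; μ]| := by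
  have := hX.isProbabilityMeasure
  rw [variance_fun_sum' fun k _ => memLp_sq_of_hasGaussianLaw (hX.hasGaussianLaw_eval k)]
  simp_rw [mul_sum]
  exact sum_le_sum fun i _ => sum_le_sum fun j _ =>
    (le_abs_self _).trans (abs_covariance_sq_sq_le_of_hasGaussianLaw
      hX.hasGaussianLaw_prodMk (hm i) (hm j) (hv i) (hv j))

lemma ae_tendsto_average_sq (hX : IsGaussianProcess X μ) (hm : ∀ k, μ[X k] = m)
    (hv : ∀ k, Var[X k; μ] = v) (hp : p < 2)
    (hcov : (fun n : ℕ => ∑ i ∈ range n, ∑ j ∈ range n, |cov[X i, X j; μ]|) =O[atTop]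
      fun n : ℕ => (n : ℝ) ^ p) :
    ∀ᵐ ω ∂μ, Tendsto (fun n : ℕ => (∑ k ∈ range n, X k ω ^ 2) / n) atTop (𝓝 (m ^ 2 + v)) := by
  have := hX.isProbabilityMeasure
  have hvar : (fun n : ℕ => Var[fun ω => ∑ k ∈ range n, X k ω ^ 2; μ]) =O[atTop]
      fun n : ℕ => (n : ℝ) ^ p := by
    refine (IsBigO.of_norm_le fun n => ?_).trans (hcov.const_mul_left (4 * m ^ 2 + 2 * v))
    rw [Real.norm_of_nonneg (variance_nonneg _ _)]
    exact variance_sum_sq_le hX hm hv n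
  refine ae_tendsto_average_of_variance_isBigO
    (fun k => memLp_sq_of_hasGaussianLaw (hX.hasGaussianLaw_eval k))
    (fun k ω => sq_nonneg _) (fun k => ?_) hp hvar
  rw [integral_sq_of_hasGaussianLaw (hX.hasGaussianLaw_eval k), hm, hv]

end GaussianProcess

section LagProducts

lemma sum_range_shift_le {f : ℕ → ℝ} (hf : ∀ i, 0 ≤ f i) (a : ℕ) {n N : ℕ} (hN : n + a ≤ N) :
    ∑ i ∈ range n, f (i + a) ≤ ∑ i ∈ range N, f i := by
  rw [Finset.range_eq_Ico, sum_Ico_add' f 0 n a, zero_add]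
  refine sum_le_sum_of_subset_of_nonneg (fun i hi => ?_) fun i _ _ => hf i
  exact Finset.mem_range.2 ((Finset.mem_Ico.1 hi).2.trans_le hN)

lemma isBigO_natCast_add_rpow (a : ℕ) (p : ℝ) :
    (fun n : ℕ => ((n + a : ℕ) : ℝ) ^ p) =O[atTop] fun n : ℕ => (n : ℝ) ^ p := by
  have htheta : (fun n : ℕ => ((n + a : ℕ) : ℝ)) =Θ[atTop] fun n : ℕ => (n : ℝ) := by
    simp_rw [Nat.cast_add]
    exact (isTheta_refl _ _).add_isLittleO
      (isLittleO_const_left.2 (.inr (tendsto_norm_atTop_atTop.comp tendsto_natCast_atTop_atTop)))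
  exact (htheta.rpow (.of_forall fun n => Nat.cast_nonneg _)
    (.of_forall fun n => Nat.cast_nonneg _)).isBigO

lemma isBigO_sum_sum_shift {f : ℕ → ℕ → ℝ} (hf : ∀ i j, 0 ≤ f i j) {p : ℝ}
    (h : (fun n : ℕ => ∑ i ∈ range n, ∑ j ∈ range n, f i j) =O[atTop] fun n : ℕ => (n : ℝ) ^ p)
    (a b : ℕ) :
    (fun n : ℕ => ∑ i ∈ range n, ∑ j ∈ range n, f (i + a) (j + b)) =O[atTop]
      fun n : ℕ => (n : ℝ) ^ p := by
  have hle (n : ℕ) : ∑ i ∈ range n, ∑ j ∈ range n, f (i + a) (j + b) ≤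
      ∑ i ∈ range (n + (a + b)), ∑ j ∈ range (n + (a + b)), f i j :=
    calc ∑ i ∈ range n, ∑ j ∈ range n, f (i + a) (j + b)
        ≤ ∑ i ∈ range n, ∑ j ∈ range (n + (a + b)), f (i + a) j :=
          sum_le_sum fun i _ => sum_range_shift_le (hf _) b (by lia)
      _ ≤ ∑ i ∈ range (n + (a + b)), ∑ j ∈ range (n + (a + b)), f i j :=
          sum_range_shift_le (fun i => sum_nonneg fun j _ => hf i j) a (by lia)
  refine (IsBigO.of_norm_le fun n => ?_).trans
    ((h.comp_tendsto (tendsto_add_atTop_nat (a + b))).trans (isBigO_natCast_add_rpow (a + b) p))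
  rw [Real.norm_of_nonneg (sum_nonneg fun i _ => sum_nonneg fun j _ => hf _ _)]
  exact hle n

variable {Ω : Type*} [MeasurableSpace Ω] {μ : Measure Ω}

lemma isGaussianProcess_add_comp {T S : Type*} {Y : T → Ω → ℝ} (hY : IsGaussianProcess Y μ)
    (f g : S → T) : IsGaussianProcess (fun s => Y (f s) + Y (g s)) μ := by
  classical
  exact hY.of_isGaussianProcess fun s => ⟨{f s, g s},
    .proj ⟨f s, by simp⟩ + .proj ⟨g s, by simp⟩, fun ω => by simp⟩

variable {Y : ℕ → Ω → ℝ} {c : ℤ → ℝ} {m p : ℝ}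

lemma ae_tendsto_average_add_sq (hY : IsGaussianProcess Y μ) (hm : ∀ k, μ[Y k] = m)
    (hcov : ∀ i j : ℕ, cov[Y i, Y j; μ] = c (i - j)) (hp : p < 2)
    (hc : (fun n : ℕ => ∑ i ∈ range n, ∑ j ∈ range n, |c (i - j)|) =O[atTop]
      fun n : ℕ => (n : ℝ) ^ p) (a b : ℕ) :
    ∀ᵐ ω ∂μ, Tendsto (fun n : ℕ => (∑ k ∈ range n, (Y (k + a) ω + Y (k + b) ω) ^ 2) / n) atTop
      (𝓝 ((2 * m) ^ 2 + (2 * c 0 + c (a - b) + c (b - a)))) := by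
  have := hY.isProbabilityMeasure
  have hLp (k : ℕ) : MemLp (Y k) 2 μ := (hY.hasGaussianLaw_eval k).memLp_two
  have hcov_add (i j : ℕ) :
      cov[Y (i + a) + Y (i + b), Y (j + a) + Y (j + b); μ] =
        c (↑(i + a) - ↑(j + a)) + c (↑(i + a) - ↑(j + b)) +
          (c (↑(i + b) - ↑(j + a)) + c (↑(i + b) - ↑(j + b))) := by
    rw [covariance_add_left (hLp _) (hLp _) ((hLp _).add (hLp _)),
      covariance_add_right (hLp _) (hLp _) (hLp _),
      covariance_add_right (hLp _) (hLp _) (hLp _), hcov, hcov, hcov, hcov]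
  refine ae_tendsto_average_sq (X := fun k => Y (k + a) + Y (k + b))
    (isGaussianProcess_add_comp hY (· + a) (· + b)) (fun k => ?_) (fun k => ?_) hp ?_
  · rw [integral_add' ((hLp _).integrable one_le_two) ((hLp _).integrable one_le_two), hm, hm,
      two_mul]
  · rw [← covariance_self ((hLp _).add (hLp _)).aestronglyMeasurable.aemeasurable, hcov_add]
    push_cast
    ring_nf
  · have hshift := isBigO_sum_sum_shift (f := fun i j => |c (i - j)|) (fun i j => abs_nonneg _) hc
    refine (IsBigO.of_norm_le fun n => ?_).trans
      (((hshift a a).add (hshift a b)).add ((hshift b a).add (hshift b b)))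
    rw [Real.norm_of_nonneg (by positivity)]
    simp_rw [hcov_add, ← sum_add_distrib]
    gcongr with i _ j _
    exact (abs_add_le _ _).trans (add_le_add (abs_add_le _ _) (abs_add_le _ _))

lemma ae_tendsto_average_lag_mul_of_isGaussianProcess (hY : IsGaussianProcess Y μ)
    (hm : ∀ k, μ[Y k] = m) (hcov : ∀ i j : ℕ, cov[Y i, Y j; μ] = c (i - j)) (hp : p < 2)
    (hc : (fun n : ℕ => ∑ i ∈ range n, ∑ j ∈ range n, |c (i - j)|) =O[atTop]
      fun n : ℕ => (n : ℝ) ^ p) (a b : ℕ) :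
    ∀ᵐ ω ∂μ, Tendsto (fun n : ℕ => (∑ k ∈ range n, Y (k + a) ω * Y (k + b) ω) / n) atTop
      (𝓝 (m ^ 2 + (c (a - b) + c (b - a)) / 2)) := by
  have hsq := ae_tendsto_average_add_sq hY hm hcov hp hc
  filter_upwards [hsq a b, hsq a a, hsq b b] with ω hab haa hbb
  have hpolarization (y z : ℝ) : y * z =
      (1 / 2) * (y + z) ^ 2 - (1 / 8) * (y + y) ^ 2 - (1 / 8) * (z + z) ^ 2 := by
    ring
  convert! ((hab.const_mul (1 / 2)).sub (haa.const_mul (1 / 8))).sub (hbb.const_mul (1 / 8))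
    using 2 with n
  · simp_rw [hpolarization (Y (_ + a) ω), sum_sub_distrib, ← mul_sum]
    ring
  · simp only [sub_self]
    ring

end LagProducts

section GaussianSequence

variable {Ω : Type*} [MeasurableSpace Ω] {μ : Measure Ω}

lemma isGaussianProcess_const_add {T : Type*} {X : T → Ω → ℝ} (hX : IsGaussianProcess X μ)
    (m : ℝ) : IsGaussianProcess (fun t ω => m + X t ω) μ where
  hasGaussianLaw I := by
    have hmap := (hX.hasGaussianLaw I).isGaussian_map
    have hmeas := (hX.hasGaussianLaw I).aemeasurable
    have hshift : (fun ω => I.restrict fun t => m + X t ω) =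
        (fun x : I → ℝ => (fun _ => m) + x) ∘ fun ω => I.restrict (X · ω) := rfl
    rw [hshift]
    refine ⟨?_⟩
    rw [← AEMeasurable.map_map_of_aemeasurable (by fun_prop) hmeas]
    exact inferInstance

/-- `X` is a centered Gaussian sequence with covariance kernel `K`, expressed through the laws of
its finite linear combinations. Because `Real.toNNReal` truncates, `K` is not required to be
positive semidefinite. -/
def IsCenteredGaussianSequence (X : ℕ → Ω → ℝ) (K : ℕ → ℕ → ℝ) (μ : Measure Ω) : Prop :=
  ∀ (n : ℕ) (a : Fin n → ℝ), μ.map (fun ω => ∑ k : Fin n, a k * X k ω) =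
    gaussianReal 0 (Real.toNNReal (∑ i : Fin n, ∑ j : Fin n, a i * a j * K i j))

namespace IsCenteredGaussianSequence

variable {X : ℕ → Ω → ℝ} {K : ℕ → ℕ → ℝ}

lemma hasLaw_sum_mul (hX : IsCenteredGaussianSequence X K μ) {n : ℕ} (a : Fin n → ℝ) :
    HasLaw (fun ω => ∑ k : Fin n, a k * X k ω)
      (gaussianReal 0 (Real.toNNReal (∑ i : Fin n, ∑ j : Fin n, a i * a j * K i j))) μ where
  aemeasurable := by
    refine aemeasurable_of_map_neZero ?_
    rw [hX n a]
    exact inferInstance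
  map_eq := hX n a

lemma hasLaw_mul_add_mul (hX : IsCenteredGaussianSequence X K μ) (p q : ℕ) (s t : ℝ) :
    HasLaw (fun ω => s * X p ω + t * X q ω)
      (gaussianReal 0 (Real.toNNReal
        (s * s * K p p + s * t * K p q + t * s * K q p + t * t * K q q))) μ := by
  let a : Fin (p + q + 1) → ℝ :=
    Pi.single ⟨p, by lia⟩ s + Pi.single ⟨q, by lia⟩ t
  have ha (f : ℕ → ℝ) : ∑ k, a k * f k = s * f p + t * f q := by
    simp [a, Pi.single_apply, add_mul, sum_add_distrib]
  convert! hX.hasLaw_sum_mul a using 3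
  · exact (ha (X · _)).symm
  · simp_rw [mul_assoc, ← mul_sum]
    rw [ha fun i => ∑ j, a j * K i j, ha, ha]
    ring

lemma hasLaw (hX : IsCenteredGaussianSequence X K μ) (p : ℕ) :
    HasLaw (X p) (gaussianReal 0 (Real.toNNReal (K p p))) μ := by
  simpa using hX.hasLaw_mul_add_mul p p 1 0

lemma aemeasurable (hX : IsCenteredGaussianSequence X K μ) (p : ℕ) : AEMeasurable (X p) μ :=
  (hX.hasLaw p).aemeasurable

lemma integral_eq_zero (hX : IsCenteredGaussianSequence X K μ) (p : ℕ) : μ[X p] = 0 := by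
  rw [(hX.hasLaw p).integral_eq, integral_id_gaussianReal]

lemma hasGaussianLaw_fin (hX : IsCenteredGaussianSequence X K μ) (n : ℕ) :
    HasGaussianLaw (fun ω (k : Fin n) => X k ω) μ where
  isGaussian_map := isGaussian_of_isGaussian_map fun L => by
    have hL : L ∘ (fun ω (k : Fin n) => X k ω) =
        fun ω => ∑ k : Fin n, L (fun j => if k = j then 1 else 0) * X k ω := by
      funext ω
      simpa [mul_comm] using L.toLinearMap.pi_apply_eq_sum_univ fun k : Fin n => X k ω
    have hmeas : AEMeasurable (fun ω (k : Fin n) => X k ω) μ :=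
      aemeasurable_pi_lambda _ fun k => hX.aemeasurable k
    rw [AEMeasurable.map_map_of_aemeasurable (by fun_prop) hmeas, hL, hX]
    exact inferInstance

lemma isGaussianProcess (hX : IsCenteredGaussianSequence X K μ) : IsGaussianProcess X μ where
  hasGaussianLaw I := by
    have hlt (i : I) : (i : ℕ) < I.sup id + 1 := Nat.lt_succ_of_le (le_sup (f := id) i.2)
    exact (hX.hasGaussianLaw_fin (I.sup id + 1)).map_fun
      (.pi fun i : I => .proj ⟨i, hlt i⟩ : (Fin (I.sup id + 1) → ℝ) →L[ℝ] I → ℝ)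

lemma covariance_eq (hX : IsCenteredGaussianSequence X K μ) (hsymm : ∀ i j, K i j = K j i)
    (hdiag : ∀ i, 0 ≤ K i i) (p q : ℕ) : cov[X p, X q; μ] = K p q := by
  have := hX.isGaussianProcess.isProbabilityMeasure
  have hLp (k : ℕ) : MemLp (X k) 2 μ := (hX.isGaussianProcess.hasGaussianLaw_eval k).memLp_two
  have hvar (k : ℕ) : Var[X k; μ] = K k k := by
    rw [(hX.hasLaw k).variance_eq, variance_id_gaussianReal, Real.coe_toNNReal _ (hdiag k)]
  have hvar_add := variance_add (hLp p) (hLp q)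
  have hvar_sub := variance_sub (hLp p) (hLp q)
  have hlaw_add : HasLaw (X p + X q)
      (gaussianReal 0 (Real.toNNReal (K p p + 2 * K p q + K q q))) μ := by
    convert! hX.hasLaw_mul_add_mul p q 1 1 using 3
    · simp
    · rw [hsymm q p]
      ring
  have hlaw_sub : HasLaw (X p - X q)
      (gaussianReal 0 (Real.toNNReal (K p p - 2 * K p q + K q q))) μ := by
    convert! hX.hasLaw_mul_add_mul p q 1 (-1) using 3
    · simp [sub_eq_add_neg]
    · rw [hsymm q p]
      ring
  rw [hlaw_add.variance_eq, variance_id_gaussianReal, hvar, hvar] at hvar_add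
  rw [hlaw_sub.variance_eq, variance_id_gaussianReal, hvar, hvar] at hvar_sub
  -- Whatever the sign of `K p q`, it leaves one of the two variances untruncated.
  rcases le_total 0 (K p q) with hpos | hneg
  · rw [Real.coe_toNNReal _ (by linarith [hdiag p, hdiag q])] at hvar_add
    linarith
  · rw [Real.coe_toNNReal _ (by linarith [hdiag p, hdiag q])] at hvar_sub
    linarith

lemma ae_tendsto_average_lag_mul {c : ℤ → ℝ} {p : ℝ}
    (hX : IsCenteredGaussianSequence X (fun i j => c (i - j)) μ) (hzero : 0 ≤ c 0)
    (heven : ∀ k, c (-k) = c k) (hp : p < 2)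
    (hc : (fun n : ℕ => ∑ i ∈ range n, ∑ j ∈ range n, |c (i - j)|) =O[atTop]
      fun n : ℕ => (n : ℝ) ^ p) (m : ℝ) (a b : ℕ) :
    ∀ᵐ ω ∂μ, Tendsto
      (fun n : ℕ => (∑ k ∈ range n, (m + X (k + a) ω) * (m + X (k + b) ω)) / n) atTop
      (𝓝 (m ^ 2 + c (b - a))) := by
  have hprocess := hX.isGaussianProcess
  have := hprocess.isProbabilityMeasure
  have hint (k : ℕ) : Integrable (X k) μ := (hprocess.hasGaussianLaw_eval k).integrable
  have hmean (k : ℕ) : ∫ ω, m + X k ω ∂μ = m := by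
    rw [integral_add (integrable_const m) (hint k), hX.integral_eq_zero]
    simp
  have hcov (i j : ℕ) : cov[fun ω => m + X i ω, fun ω => m + X j ω; μ] = c (i - j) := by
    rw [covariance_const_add_left (hint i), covariance_const_add_right (hint j)]
    refine hX.covariance_eq (fun i j => ?_) (fun i => ?_) i j
    · rw [← heven, neg_sub]
    · rwa [sub_self]
  have hlimit : (c (a - b) + c (b - a)) / 2 = c (b - a) := by
    rw [← heven (a - b), neg_sub, add_self_div_two]
  rw [← hlimit]
  exact ae_tendsto_average_lag_mul_of_isGaussianProcess (isGaussianProcess_const_add hprocess m)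
    hmean hcov hp hc a b

end IsCenteredGaussianSequence

end GaussianSequence

section FractionalCovariance

variable {σ γ h H : ℝ}

lemma rhoH_neg (H : ℝ) (k : ℤ) : rhoH H (-k) = rhoH H k := by
  have hadd : |(-k + 1 : ℝ)| = |(k - 1 : ℝ)| := by rw [← abs_neg]; congr 1; ring
  have hsub : |(-k - 1 : ℝ)| = |(k + 1 : ℝ)| := by rw [← abs_neg]; congr 1; ring
  simp only [rhoH, Int.cast_neg, abs_neg, hadd, hsub]
  ring

lemma rhoH_sub_comm (H : ℝ) (k l : ℤ) : rhoH H (k - l) = rhoH H (l - k) := by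
  rw [← rhoH_neg, neg_sub]

lemma rhoH_nonneg (hH : 1 / 2 ≤ H) (k : ℤ) : 0 ≤ rhoH H k := by
  have hmidpoint : |(k : ℝ)| ≤ (1 / 2) * |(k : ℝ) + 1| + (1 / 2) * |(k : ℝ) - 1| := by
    have := abs_add_le ((k : ℝ) + 1) (k - 1)
    rw [add_add_sub_cancel, ← two_mul, abs_mul, abs_two] at this
    linarith
  have hconvex : |(k : ℝ)| ^ (2 * H) ≤
      (1 / 2) * |(k : ℝ) + 1| ^ (2 * H) + (1 / 2) * |(k : ℝ) - 1| ^ (2 * H) :=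
    calc |(k : ℝ)| ^ (2 * H)
        ≤ ((1 / 2) * |(k : ℝ) + 1| + (1 / 2) * |(k : ℝ) - 1|) ^ (2 * H) :=
          Real.rpow_le_rpow (abs_nonneg _) hmidpoint (by linarith)
      _ ≤ _ := (convexOn_rpow (by linarith)).2 (abs_nonneg ((k : ℝ) + 1))
          (abs_nonneg ((k : ℝ) - 1)) (by norm_num) (by norm_num) (by norm_num)
  unfold rhoH
  linarith

lemma rhoH_natCast_add_one (H : ℝ) (n : ℕ) : rhoH H (n + 1) =
    (((n + 2 : ℕ) : ℝ) ^ (2 * H) + (n : ℝ) ^ (2 * H) - 2 * ((n + 1 : ℕ) : ℝ) ^ (2 * H)) / 2 := by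
  have hadd : ((n : ℤ) + 1 : ℤ) + (1 : ℝ) = ((n + 2 : ℕ) : ℝ) := by push_cast; ring
  have hsub : ((n : ℤ) + 1 : ℤ) - (1 : ℝ) = n := by push_cast; ring
  have hcast : (((n : ℤ) + 1 : ℤ) : ℝ) = ((n + 1 : ℕ) : ℝ) := by push_cast; ring
  rw [rhoH, hadd, hsub, hcast]
  simp only [Nat.abs_cast]

lemma rhoH_zero (hH : H ≠ 0) : rhoH H 0 = 1 := by
  simp [rhoH, hH]

lemma rhoH_one (hH : H ≠ 0) : rhoH H 1 = 2 ^ (2 * H - 1) - 1 := by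
  have hcast : rhoH H 1 = (2 ^ (2 * H) - 2) / 2 := by simpa [hH] using rhoH_natCast_add_one H 0
  rw [hcast, Real.rpow_sub_one two_ne_zero]
  ring

-- Self-similarity: the left side is the lag-`k` covariance of increments of doubled length.
lemma rhoH_two_mul (H : ℝ) (k : ℤ) :
    rhoH H (2 * k - 1) + 2 * rhoH H (2 * k) + rhoH H (2 * k + 1) = 2 ^ (2 * H) * rhoH H k := by
  have hscale (x : ℝ) : |2 * x| ^ (2 * H) = 2 ^ (2 * H) * |x| ^ (2 * H) := by
    rw [abs_mul, abs_two, Real.mul_rpow two_pos.le (abs_nonneg x)]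
  have hright : 2 * (k : ℝ) + 1 + 1 = 2 * (k + 1) := by ring
  have hleft : 2 * (k : ℝ) - 1 - 1 = 2 * (k - 1) := by ring
  simp only [rhoH, Int.cast_add, Int.cast_sub, Int.cast_mul, Int.cast_ofNat, Int.cast_one, hright,
    hleft, hscale, add_sub_cancel_right, sub_add_cancel]
  ring

lemma sum_rhoH_natCast_sub (hH : H ≠ 0) (n : ℕ) :
    2 * ∑ j ∈ range n, rhoH H (n - j) + 1 = ((n + 1 : ℕ) : ℝ) ^ (2 * H) - (n : ℝ) ^ (2 * H) := by
  have hreflect : ∑ j ∈ range n, rhoH H (n - j) = ∑ j ∈ range n, rhoH H (j + 1) := by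
    rw [← sum_range_reflect]
    refine sum_congr rfl fun j hj => ?_
    have := Finset.mem_range.1 hj
    congr 1
    lia
  let d (k : ℕ) : ℝ := ((k + 1 : ℕ) : ℝ) ^ (2 * H) - (k : ℝ) ^ (2 * H)
  have htelescope (k : ℕ) : rhoH H (k + 1) = (d (k + 1) - d k) / 2 := by
    rw [rhoH_natCast_add_one]
    ring
  have hd_zero : d 0 = 1 := by simp [d, hH]
  change _ = d n
  simp_rw [hreflect, htelescope, ← sum_div, sum_range_sub, hd_zero]
  ring

lemma sum_sum_rhoH_sub (hH : H ≠ 0) (n : ℕ) :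
    ∑ i ∈ range n, ∑ j ∈ range n, rhoH H (i - j) = (n : ℝ) ^ (2 * H) := by
  induction n with
  | zero => simp [hH]
  | succ n ih =>
    have hsymm : ∑ i ∈ range n, rhoH H (i - n) = ∑ i ∈ range n, rhoH H (n - i) :=
      sum_congr rfl fun i _ => rhoH_sub_comm H i n
    simp only [sum_range_succ, sum_add_distrib, ih, hsymm, sub_self, rhoH_zero hH]
    linarith [sum_rhoH_natCast_sub hH n]

lemma mixedCov_neg (σ γ h H : ℝ) (k : ℤ) : mixedCov σ γ h H (-k) = mixedCov σ γ h H k := by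
  simp only [mixedCov, neg_eq_zero, rhoH_neg]

lemma mixedCov_nonneg (hh : 0 ≤ h) (hH : 1 / 2 ≤ H) (k : ℤ) : 0 ≤ mixedCov σ γ h H k := by
  have := rhoH_nonneg hH k
  unfold mixedCov
  positivity

lemma mixedCov_zero (hH : H ≠ 0) : mixedCov σ γ h H 0 = σ ^ 2 * h + γ ^ 2 * h ^ (2 * H) := by
  simp [mixedCov, rhoH_zero hH]

lemma mixedCov_of_ne_zero {k : ℤ} (hk : k ≠ 0) :
    mixedCov σ γ h H k = γ ^ 2 * h ^ (2 * H) * rhoH H k := by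
  simp [mixedCov, hk]

lemma mixedCov_one (hH : H ≠ 0) :
    mixedCov σ γ h H 1 = γ ^ 2 * h ^ (2 * H) * (2 ^ (2 * H - 1) - 1) := by
  rw [mixedCov_of_ne_zero one_ne_zero, rhoH_one hH]

lemma mixedCov_one_add_two_mul_add_mixedCov_three (hH : H ≠ 0) :
    mixedCov σ γ h H 1 + 2 * mixedCov σ γ h H 2 + mixedCov σ γ h H 3 =
      γ ^ 2 * h ^ (2 * H) * 2 ^ (2 * H) * (2 ^ (2 * H - 1) - 1) := by
  have hdouble : rhoH H 1 + 2 * rhoH H 2 + rhoH H 3 = 2 ^ (2 * H) * rhoH H 1 := rhoH_two_mul H 1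
  rw [mixedCov_of_ne_zero one_ne_zero, mixedCov_of_ne_zero two_ne_zero,
    mixedCov_of_ne_zero three_ne_zero]
  linear_combination γ ^ 2 * h ^ (2 * H) * (hdouble + 2 ^ (2 * H) * rhoH_one hH)

lemma sum_sum_mixedCov_sub (hH : H ≠ 0) (n : ℕ) :
    ∑ i ∈ range n, ∑ j ∈ range n, mixedCov σ γ h H (i - j) =
      σ ^ 2 * h * n + γ ^ 2 * h ^ (2 * H) * (n : ℝ) ^ (2 * H) := by
  have hdiag : ∑ i ∈ range n, ∑ j ∈ range n, (if (i : ℤ) - j = 0 then (1 : ℝ) else 0) = n := by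
    simp +contextual [sub_eq_zero, sum_ite_eq]
  simp only [mixedCov, sum_add_distrib, ← mul_sum, hdiag, sum_sum_rhoH_sub hH]

lemma isBigO_sum_sum_abs_mixedCov (hh : 0 ≤ h) (hH : 1 / 2 ≤ H) :
    (fun n : ℕ => ∑ i ∈ range n, ∑ j ∈ range n, |mixedCov σ γ h H (i - j)|) =O[atTop]
      fun n : ℕ => (n : ℝ) ^ (2 * H) := by
  have hlinear : (fun n : ℕ => (n : ℝ)) =O[atTop] fun n : ℕ => (n : ℝ) ^ (2 * H) := by
    refine IsBigO.of_norm_eventuallyLE ?_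
    filter_upwards [eventually_ge_atTop 1] with n hn
    rw [Real.norm_natCast]
    exact Real.self_le_rpow_of_one_le (Nat.one_le_cast.2 hn) (by linarith)
  simp_rw [abs_of_nonneg (mixedCov_nonneg hh hH _),
    sum_sum_mixedCov_sub (show H ≠ 0 by linarith)]
  exact (hlinear.const_mul_left _).add ((isBigO_refl _ _).const_mul_left _)

end FractionalCovariance

/-- Almost-sure convergence of the three empirical second-moment statistics of the
drifted increments `Y_k(ω) = θ h + ω_k` of a mixed fractional Brownian motion. -/
theorem empirical_statistics_ae_tendsto
    (σ γ h H θ : ℝ) (hσ : 0 < σ) (hγ : 0 < γ) (hh : 0 < h)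
    (hH : H ∈ Set.Ioo (1/2 : ℝ) 1)
    (μ : Measure (ℕ → ℝ)) [IsProbabilityMeasure μ]
    (hinv : MeasurePreserving shift μ μ)
    (hgauss : ∀ (n : ℕ) (a : Fin n → ℝ),
      Measure.map (fun ω : ℕ → ℝ => ∑ k : Fin n, a k * ω (k : ℕ)) μ =
        ProbabilityTheory.gaussianReal 0
          (Real.toNNReal (∑ i : Fin n, ∑ j : Fin n,
            a i * a j * mixedCov σ γ h H ((i : ℤ) - (j : ℤ))))) :
    ∀ᵐ ω ∂μ,
      Tendsto (fun n : ℕ =>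
          (1 / (n : ℝ)) * ∑ k ∈ Finset.range n, (θ * h + ω k) ^ 2)
        atTop (nhds (θ ^ 2 * h ^ 2 + σ ^ 2 * h + γ ^ 2 * h ^ (2 * H))) ∧
      Tendsto (fun n : ℕ =>
          (1 / (n : ℝ)) * ∑ k ∈ Finset.range n, (θ * h + ω k) * (θ * h + ω (k + 1)))
        atTop (nhds (θ ^ 2 * h ^ 2 + γ ^ 2 * h ^ (2 * H) * ((2 : ℝ) ^ (2 * H - 1) - 1))) ∧
      Tendsto (fun n : ℕ =>
          (1 / (n : ℝ)) * ∑ k ∈ Finset.range n,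
            ((θ * h + ω k) + (θ * h + ω (k + 1))) * ((θ * h + ω (k + 2)) + (θ * h + ω (k + 3))))
        atTop (nhds (4 * θ ^ 2 * h ^ 2 +
          γ ^ 2 * h ^ (2 * H) * (2 : ℝ) ^ (2 * H) * ((2 : ℝ) ^ (2 * H - 1) - 1))) := by
  have hlag := IsCenteredGaussianSequence.ae_tendsto_average_lag_mul
    (X := fun k (ω : ℕ → ℝ) => ω k) (c := mixedCov σ γ h H) hgauss (mixedCov_nonneg hh.le hH.1.le 0)
    (mixedCov_neg σ γ h H) (show 2 * H < 2 by linarith [hH.2])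
    (isBigO_sum_sum_abs_mixedCov hh.le hH.1.le) (θ * h)
  have hH0 : H ≠ 0 := (one_half_pos.trans hH.1).ne'
  filter_upwards [hlag 0 0, hlag 0 1, hlag 0 2, hlag 0 3, hlag 1 2, hlag 1 3]
    with ω h00 h01 h02 h03 h12 h13
  simp only [one_div_mul_eq_div]
  refine ⟨?_, ?_, ?_⟩
  · convert! h00 using 2
    · simp only [add_zero, sq]
    · rw [sub_self, mixedCov_zero hH0]
      ring
  · convert! h01 using 2
    rw [Nat.cast_one, Nat.cast_zero, sub_zero, mixedCov_one hH0]
    ring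
  · convert! (h02.add h03).add (h12.add h13) using 2
    · simp only [add_zero, ← add_div, ← sum_add_distrib, ← mul_add, ← add_mul]
    · simp only [Nat.cast_ofNat, Nat.cast_one, Nat.cast_zero, sub_zero, Int.reduceSub]
      linarith [mixedCov_one_add_two_mul_add_mixedCov_three (σ := σ) (γ := γ) (h := h) hH0]
end

section
/- For every integer m ≥ 1, the Lebesgue constant of the Chebyshev–Gauss nodes satisfies max_{x∈[−1,1]} Σ_{j=1}^m |𝓛_j(x)| ≤ (2/π) ln(m + 1) + 1. -/
open Filter Set Finset Real

noncomputable def chebNode (m j : ℕ) : ℝ :=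
  Real.cos ((2 * (j : ℝ) - 1) * Real.pi / (2 * (m : ℝ)))

noncomputable def lagBasis (m j : ℕ) (x : ℝ) : ℝ :=
  ∏ i ∈ (Finset.Icc 1 m).erase j, (x - chebNode m i) / (chebNode m j - chebNode m i)

/-!
Write the nodes as `cos θ_j` with `θ_j = (2j - 1)π / (2m)`. Away from the nodes,
`𝓛_j (cos θ) = ± cos (mθ) / (2m) * (cot ((θ_j - θ) / 2) + cot ((θ_j + θ) / 2))`. Replacing the sum
of cotangents by the sum of their absolute values gives a majorant of the Lebesgue function. The
angles `± θ_j` are equally spaced on the circle, so the majorant has period `π / m` in `θ`, and for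
`|θ| ≤ π / (2m)` all the cotangents are nonnegative, so that there it is the Lebesgue function
itself. Since `cos θ` then lies to the right of all nodes, where each `|𝓛_j|` is increasing, the
maximum is attained at `x = 1`. The value `∑ cot (θ_j / 2) / m` at that point is estimated with
`cot x ≤ 1 / x - x / 3`.
-/

section LagrangeBasis

open Polynomial

variable {ι F : Type*} [Field F] {s : Finset ι} {v : ι → F} {p : F[X]}

lemma eq_C_leadingCoeff_mul_nodal (hv : Set.InjOn v s) (hdeg : p.degree = #s)
    (hp : ∀ i ∈ s, p.eval (v i) = 0) : p = C p.leadingCoeff * Lagrange.nodal s v := by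
  have hp0 : p ≠ 0 := ne_zero_of_coe_le_degree hdeg.ge
  refine eq_of_degree_le_of_eval_index_eq s hv hdeg.le ?_ ?_ fun i hi ↦ ?_
  · rw [degree_C_mul (leadingCoeff_ne_zero.mpr hp0), Lagrange.degree_nodal, hdeg]
  · rw [leadingCoeff_mul, leadingCoeff_C, Lagrange.nodal_monic.leadingCoeff, mul_one]
  · rw [hp i hi, eval_C_mul, Lagrange.eval_nodal_at_node hi, mul_zero]

lemma exists_eq_node_of_eval_eq_zero (hv : Set.InjOn v s) (hdeg : p.degree = #s)
    (hp : ∀ i ∈ s, p.eval (v i) = 0) {x : F} (hx : p.eval x = 0) : ∃ i ∈ s, x = v i := by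
  have hp0 : p ≠ 0 := ne_zero_of_coe_le_degree hdeg.ge
  rw [eq_C_leadingCoeff_mul_nodal hv hdeg hp, eval_C_mul] at hx
  have hnodal := (mul_eq_zero.mp hx).resolve_left (leadingCoeff_ne_zero.mpr hp0)
  by_contra! hne
  exact Lagrange.eval_nodal_not_at_node hne hnodal

variable [DecidableEq ι]

lemma eval_basis_eq_eval_div_derivative (hv : Set.InjOn v s) (hdeg : p.degree = #s)
    (hp : ∀ i ∈ s, p.eval (v i) = 0) {i : ι} (hi : i ∈ s) {x : F} (hx : x ≠ v i) :
    (Lagrange.basis s v i).eval x = p.eval x / (p.derivative.eval (v i) * (x - v i)) := by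
  have hlc : p.leadingCoeff ≠ 0 := leadingCoeff_ne_zero.mpr (ne_zero_of_coe_le_degree hdeg.ge)
  rw [Lagrange.eval_basis_not_at_node hi hx, Lagrange.nodalWeight_eq_eval_derivative_nodal hi,
    eq_C_leadingCoeff_mul_nodal hv hdeg hp, derivative_C_mul, eval_C_mul, eval_C_mul, mul_assoc,
    mul_div_mul_left _ _ hlc, div_eq_mul_inv, mul_inv]

lemma sum_abs_eval_basis_node {K : Type*} [Field K] [LinearOrder K] [IsOrderedRing K] {v : ι → K}
    (hv : Set.InjOn v s) {k : ι} (hk : k ∈ s) :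
    ∑ i ∈ s, |(Lagrange.basis s v i).eval (v k)| = 1 := by
  rw [sum_eq_single_of_mem k hk fun i _ hik ↦ by rw [Lagrange.eval_basis_of_ne hik hk, abs_zero],
    Lagrange.eval_basis_self hv hk, abs_one]

end LagrangeBasis

section Cotangent

lemma cot_add_pi (x : ℝ) : cot (x + π) = cot x := by
  simp [cot_eq_cos_div_sin, neg_div_neg_eq]

lemma cot_pi_sub (x : ℝ) : cot (π - x) = -cot x := by
  simp [cot_eq_cos_div_sin, neg_div]

lemma cot_nonneg_of_mem_Icc {x : ℝ} (hx : x ∈ Set.Icc 0 (π / 2)) : 0 ≤ cot x := by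
  rw [cot_eq_cos_div_sin]
  exact div_nonneg (cos_nonneg_of_mem_Icc ⟨by linarith [hx.1, pi_pos], hx.2⟩)
    (sin_nonneg_of_nonneg_of_le_pi hx.1 (by linarith [hx.2, pi_pos]))

lemma cot_half_sub_add_cot_half_add {t θ : ℝ} (h : cos θ ≠ cos t) :
    cot ((t - θ) / 2) + cot ((t + θ) / 2) = 2 * sin t / (cos θ - cos t) := by
  obtain ⟨a, b, rfl, rfl⟩ : ∃ a b, t = b + a ∧ θ = b - a :=
    ⟨(t - θ) / 2, (t + θ) / 2, by ring, by ring⟩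
  have hhalf_sub : (b + a - (b - a)) / 2 = a := by ring
  have hhalf_add : (b + a + (b - a)) / 2 = b := by ring
  have hprod : cos (b - a) - cos (b + a) = 2 * sin a * sin b := by
    rw [cos_sub, cos_add]
    ring
  have hne : 2 * sin a * sin b ≠ 0 := hprod ▸ sub_ne_zero.mpr h
  have ha : sin a ≠ 0 := right_ne_zero_of_mul (left_ne_zero_of_mul hne)
  have hb : sin b ≠ 0 := right_ne_zero_of_mul hne
  rw [hhalf_sub, hhalf_add, hprod, sin_add, cot_eq_cos_div_sin, cot_eq_cos_div_sin]
  field_simp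

lemma mul_cos_le_sin {x : ℝ} (h0 : 0 ≤ x) (hπ : x ≤ π) : x * cos x ≤ sin x := by
  rcases lt_or_ge x (π / 2) with hx | hx
  · have hcos : 0 < cos x := cos_pos_of_mem_Ioo ⟨by linarith [pi_pos], hx⟩
    rw [← le_div_iff₀ hcos, ← tan_eq_sin_div_cos]
    exact le_tan h0 hx
  · exact (mul_nonpos_of_nonneg_of_nonpos h0
      (cos_nonpos_of_pi_div_two_le_of_le hx (by linarith [pi_pos]))).trans
      (sin_nonneg_of_nonneg_of_le_pi h0 hπ)

lemma mul_cos_le_one_sub_sq_div_three_mul_sin {x : ℝ} (h0 : 0 ≤ x) (hπ : x ≤ π) :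
    x * cos x ≤ (1 - x ^ 2 / 3) * sin x := by
  have hderiv (y : ℝ) : HasDerivAt (fun y ↦ (1 - y ^ 2 / 3) * sin y - y * cos y)
      (y / 3 * (sin y - y * cos y)) y := by
    have hquad : HasDerivAt (fun y : ℝ ↦ 1 - y ^ 2 / 3) (-(2 * y / 3)) y := by
      simpa using ((hasDerivAt_pow 2 y).div_const 3).const_sub 1
    refine ((hquad.mul (hasDerivAt_sin y)).sub
      ((hasDerivAt_id y).mul (hasDerivAt_cos y))).congr_deriv ?_
    simp only [id_eq]
    ring
  have hmono : MonotoneOn (fun y ↦ (1 - y ^ 2 / 3) * sin y - y * cos y) (Set.Icc 0 π) := by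
    refine monotoneOn_of_hasDerivWithinAt_nonneg (convex_Icc _ _) (by fun_prop)
      (fun y _ ↦ (hderiv y).hasDerivWithinAt) fun y hy ↦ ?_
    obtain ⟨hy0, hyπ⟩ := interior_subset hy
    exact mul_nonneg (by positivity) (sub_nonneg.mpr (mul_cos_le_sin hy0 hyπ))
  simpa using hmono ⟨le_rfl, pi_pos.le⟩ ⟨h0, hπ⟩ h0

lemma cot_le_one_div_sub_div_three {x : ℝ} (h0 : 0 < x) (hπ : x < π) :
    cot x ≤ 1 / x - x / 3 := by
  have hsin : 0 < sin x := sin_pos_of_pos_of_lt_pi h0 hπ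
  calc cot x = x * cos x / (x * sin x) := by
        rw [cot_eq_cos_div_sin, mul_div_mul_left _ _ h0.ne']
    _ ≤ (1 - x ^ 2 / 3) * sin x / (x * sin x) := by
        gcongr ?_ / _
        exact mul_cos_le_one_sub_sq_div_three_mul_sin h0.le hπ.le
    _ = 1 / x - x / 3 := by field_simp

end Cotangent

section OddSums

lemma sum_Icc_two_mul_sub_one (n : ℕ) : ∑ j ∈ Finset.Icc 1 n, (2 * (j : ℝ) - 1) = n ^ 2 := by
  induction n with
  | zero => simp
  | succ n ih =>
    rw [sum_Icc_succ_top (by lia), ih]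
    push_cast
    ring

lemma two_div_two_mul_add_one_le_log_sub_log {x : ℝ} (hx : 0 < x) :
    2 / (2 * x + 1) ≤ log (x + 1) - log x := by
  calc 2 / (2 * x + 1) = 2 * x⁻¹ / (x⁻¹ + 2) := by
        field_simp
        ring
    _ ≤ log (1 + x⁻¹) := le_log_one_add_of_nonneg (by positivity)
    _ = log (x + 1) - log x := by
        rw [← log_div (by positivity) hx.ne', add_div, div_self hx.ne', one_div]

lemma antitoneOn_sum_inv_odd_sub_log : AntitoneOn
    (fun n : ℕ ↦ ∑ j ∈ Finset.Icc 1 n, 1 / (2 * (j : ℝ) - 1) - log n / 2) (Set.Ici 1) := by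
  refine antitoneOn_nat_Ici_of_succ_le fun n hn ↦ ?_
  have hlog := two_div_two_mul_add_one_le_log_sub_log (x := n) (by positivity)
  have hodd : 1 / (2 * ((n + 1 : ℕ) : ℝ) - 1) = 2 / (2 * (n : ℝ) + 1) / 2 := by
    push_cast
    ring
  rw [sum_Icc_succ_top (by lia), hodd]
  push_cast
  linarith

lemma sum_inv_odd_le_log (n : ℕ) : ∑ j ∈ Finset.Icc 1 n, 1 / (2 * (j : ℝ) - 1) ≤
    log (n + 1) / 2 + (4 / 3 - log 2 / 2) := by
  rcases lt_or_ge n 2 with hn | hn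
  · have := log_two_lt_d9
    interval_cases n
    · norm_num
      linarith
    · norm_num
  · have hanti := antitoneOn_sum_inv_odd_sub_log (a := 2) (by simp) (by grind) hn
    have hlog : log n ≤ log (n + 1) := log_le_log (by positivity) (by linarith)
    have htwo : ∑ j ∈ Finset.Icc (1 : ℕ) 2, 1 / (2 * (j : ℝ) - 1) = 4 / 3 := by
      norm_num [sum_Icc_succ_top]
    simp only [htwo, Nat.cast_ofNat] at hanti
    linarith

end OddSums

section ChebyshevNodes

open Polynomial

variable {m j : ℕ}

/-- The angle `θ_j = (2j - 1)π / (2m)` of the `j`-th Chebyshev–Gauss node, so that `chebNode m j` is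
`cos (chebAngle m j)` by definition. -/
noncomputable def chebAngle (m j : ℕ) : ℝ :=
  (2 * (j : ℝ) - 1) * π / (2 * (m : ℝ))

lemma pi_div_two_mul_le_chebAngle (hj : j ∈ Finset.Icc 1 m) : π / (2 * m) ≤ chebAngle m j := by
  have hj1 : (1 : ℝ) ≤ j := mod_cast (Finset.mem_Icc.mp hj).1
  rw [chebAngle]
  gcongr
  nlinarith [pi_pos]

lemma chebAngle_le_pi_sub (hj : j ∈ Finset.Icc 1 m) : chebAngle m j ≤ π - π / (2 * m) := by
  obtain ⟨h1, hjm⟩ := Finset.mem_Icc.mp hj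
  have hm : (0 : ℝ) < m := mod_cast h1.trans hjm
  have hjm' : (j : ℝ) ≤ m := mod_cast hjm
  calc chebAngle m j ≤ (2 * (m : ℝ) - 1) * π / (2 * m) := by
        rw [chebAngle]
        gcongr
    _ = π - π / (2 * m) := by field_simp

lemma pi_div_two_mul_pos (hj : j ∈ Finset.Icc 1 m) : 0 < π / (2 * m) := by
  have hm : 0 < m := by grind
  positivity

lemma chebAngle_mem_Ioo (hj : j ∈ Finset.Icc 1 m) : chebAngle m j ∈ Set.Ioo 0 π :=
  ⟨(pi_div_two_mul_pos hj).trans_le (pi_div_two_mul_le_chebAngle hj),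
    (chebAngle_le_pi_sub hj).trans_lt (sub_lt_self _ (pi_div_two_mul_pos hj))⟩

lemma sin_chebAngle_pos (hj : j ∈ Finset.Icc 1 m) : 0 < sin (chebAngle m j) :=
  sin_pos_of_mem_Ioo (chebAngle_mem_Ioo hj)

lemma cos_mul_chebAngle (hm : m ≠ 0) (j : ℕ) : cos (m * chebAngle m j) = 0 := by
  refine cos_eq_zero_iff.mpr ⟨j - 1, ?_⟩
  rw [chebAngle]
  push_cast
  field_simp
  ring

lemma chebNode_injOn (m : ℕ) : Set.InjOn (chebNode m) (Finset.Icc 1 m) := by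
  intro i hi j hj hij
  have hm : (m : ℝ) ≠ 0 := by
    rw [Nat.cast_ne_zero]
    grind
  have hangle : chebAngle m i = chebAngle m j :=
    injOn_cos (Set.Ioo_subset_Icc_self (chebAngle_mem_Ioo hi))
      (Set.Ioo_subset_Icc_self (chebAngle_mem_Ioo hj)) hij
  have hpi := pi_ne_zero
  simp only [chebAngle] at hangle
  field_simp at hangle
  exact_mod_cast (by linarith : (i : ℝ) = j)

lemma eval_T_chebNode (hj : j ∈ Finset.Icc 1 m) : (Chebyshev.T ℝ m).eval (chebNode m j) = 0 := by
  have hT := Chebyshev.T_real_cos (chebAngle m j) m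
  rwa [Int.cast_natCast, cos_mul_chebAngle (by grind)] at hT

lemma degree_T_eq_card_Icc (m : ℕ) : (Chebyshev.T ℝ m).degree = #(Finset.Icc 1 m) := by
  simp

lemma exists_cos_eq_chebNode {θ : ℝ} (hθ : cos (m * θ) = 0) :
    ∃ k ∈ Finset.Icc 1 m, cos θ = chebNode m k :=
  exists_eq_node_of_eval_eq_zero (chebNode_injOn m) (degree_T_eq_card_Icc m)
    (fun _ ↦ eval_T_chebNode) (by rw [Chebyshev.T_real_cos, Int.cast_natCast, hθ])

lemma eval_derivative_T_cos_mul_sin (n : ℤ) (t : ℝ) :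
    (Chebyshev.T ℝ n).derivative.eval (cos t) * sin t = n * sin (n * t) := by
  rw [Chebyshev.T_derivative_eq_U, eval_mul, eval_intCast, mul_assoc, Chebyshev.U_real_cos]
  push_cast
  rw [sub_add_cancel]

lemma abs_eval_derivative_T_chebNode_mul_sin (hj : j ∈ Finset.Icc 1 m) :
    |(Chebyshev.T ℝ m).derivative.eval (chebNode m j)| * sin (chebAngle m j) = m := by
  have hsin : |sin (m * chebAngle m j)| = 1 := by
    rw [abs_sin_eq_sqrt_one_sub_cos_sq, cos_mul_chebAngle (by grind)]
    simp
  have hderiv := congrArg abs (eval_derivative_T_cos_mul_sin m (chebAngle m j))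
  rwa [Int.cast_natCast, abs_mul, abs_mul, hsin, mul_one, Nat.abs_cast,
    abs_of_pos (sin_chebAngle_pos hj)] at hderiv

end ChebyshevNodes

section ChebyshevLagrangeBasis

open Polynomial

variable {m j : ℕ}

lemma lagBasis_eq_eval_basis (m j : ℕ) (x : ℝ) :
    lagBasis m j x = (Lagrange.basis (Finset.Icc 1 m) (chebNode m) j).eval x := by
  simp only [lagBasis, Lagrange.basis, Lagrange.basisDivisor, eval_prod, eval_mul, eval_C,
    eval_sub, eval_X, inv_mul_eq_div]

lemma sum_abs_lagBasis_chebNode {k : ℕ} (hk : k ∈ Finset.Icc 1 m) :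
    ∑ j ∈ Finset.Icc 1 m, |lagBasis m j (chebNode m k)| = 1 := by
  simp only [lagBasis_eq_eval_basis]
  exact sum_abs_eval_basis_node (chebNode_injOn m) hk

lemma abs_lagBasis_cos (hj : j ∈ Finset.Icc 1 m) {θ : ℝ} (hθ : cos (m * θ) ≠ 0) :
    |lagBasis m j (cos θ)| = |cos (m * θ)| / (2 * m) *
      |cot ((chebAngle m j - θ) / 2) + cot ((chebAngle m j + θ) / 2)| := by
  have hT : (Chebyshev.T ℝ m).eval (cos θ) = cos (m * θ) := by
    rw [Chebyshev.T_real_cos, Int.cast_natCast]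
  have hne : cos θ ≠ cos (chebAngle m j) := fun h ↦
    hθ (by rw [← hT, h]; exact eval_T_chebNode hj)
  have hsub : |cos θ - cos (chebAngle m j)| ≠ 0 := abs_ne_zero.mpr (sub_ne_zero.mpr hne)
  have hm : (m : ℝ) ≠ 0 := by
    rw [Nat.cast_ne_zero]
    grind
  have hderiv := abs_eval_derivative_T_chebNode_mul_sin hj
  have hsin := sin_chebAngle_pos hj
  rw [lagBasis_eq_eval_basis, eval_basis_eq_eval_div_derivative (chebNode_injOn m)
    (degree_T_eq_card_Icc m) (fun _ ↦ eval_T_chebNode) hj hne, hT,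
    cot_half_sub_add_cot_half_add hne, abs_div, abs_div, abs_mul, abs_mul, abs_two,
    abs_of_pos hsin, eq_div_of_mul_eq hsin.ne' hderiv]
  change _ / (_ * |cos θ - cos (chebAngle m j)|) = _
  field_simp

lemma abs_lagBasis_le_abs_lagBasis {x y : ℝ} (hx : ∀ i ∈ Finset.Icc 1 m, chebNode m i ≤ x)
    (hxy : x ≤ y) (j : ℕ) : |lagBasis m j x| ≤ |lagBasis m j y| := by
  simp only [lagBasis, abs_prod, abs_div]
  gcongr with i hi
  · exact sub_nonneg.mpr (hx i (mem_of_mem_erase hi))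

lemma chebNode_le_cos {φ : ℝ} (hφ : |φ| ≤ π / (2 * m)) (hj : j ∈ Finset.Icc 1 m) :
    chebNode m j ≤ cos φ := by
  rw [← cos_abs φ]
  exact cos_le_cos_of_nonneg_of_le_pi (abs_nonneg φ) (chebAngle_mem_Ioo hj).2.le
    (hφ.trans (pi_div_two_mul_le_chebAngle hj))

lemma abs_lagBasis_one (hj : j ∈ Finset.Icc 1 m) :
    |lagBasis m j 1| = cot (chebAngle m j / 2) / m := by
  obtain ⟨hpos, hlt⟩ := chebAngle_mem_Ioo hj
  have hcot : 0 ≤ cot (chebAngle m j / 2) := cot_nonneg_of_mem_Icc ⟨by linarith, by linarith⟩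
  have h := abs_lagBasis_cos hj (θ := 0) (by simp)
  rw [cos_zero, mul_zero, cos_zero, abs_one, sub_zero, add_zero, ← two_mul,
    abs_of_nonneg (mul_nonneg zero_le_two hcot)] at h
  rw [h]
  field_simp

lemma abs_lagBasis_one_le (hj : j ∈ Finset.Icc 1 m) :
    |lagBasis m j 1| ≤
      4 / π * (1 / (2 * (j : ℝ) - 1)) - (2 * (j : ℝ) - 1) * (π / (12 * m ^ 2)) := by
  obtain ⟨hpos, hlt⟩ := chebAngle_mem_Ioo hj
  have hj1 : (1 : ℝ) ≤ j := mod_cast (Finset.mem_Icc.mp hj).1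
  have hodd : 2 * (j : ℝ) - 1 ≠ 0 := by linarith
  have hm : (m : ℝ) ≠ 0 := by
    rw [Nat.cast_ne_zero]
    grind
  calc |lagBasis m j 1| = cot (chebAngle m j / 2) / m := abs_lagBasis_one hj
    _ ≤ (1 / (chebAngle m j / 2) - chebAngle m j / 2 / 3) / m := by
        gcongr
        exact cot_le_one_div_sub_div_three (by linarith) (by linarith)
    _ = _ := by
        rw [chebAngle]
        field_simp
        ring

lemma sum_abs_lagBasis_one_le (hm : m ≠ 0) :
    ∑ j ∈ Finset.Icc 1 m, |lagBasis m j 1| ≤ 2 / π * log (m + 1) + 1 := by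
  have hconst : 4 / π * (4 / 3 - log 2 / 2) ≤ 1 + π / 12 := by
    rw [div_mul_eq_mul_div, div_le_iff₀ pi_pos]
    nlinarith [pi_gt_d2, log_two_gt_d9]
  calc ∑ j ∈ Finset.Icc 1 m, |lagBasis m j 1|
      ≤ ∑ j ∈ Finset.Icc 1 m,
          (4 / π * (1 / (2 * (j : ℝ) - 1)) - (2 * (j : ℝ) - 1) * (π / (12 * m ^ 2))) :=
        sum_le_sum fun j hj ↦ abs_lagBasis_one_le hj
    _ = 4 / π * ∑ j ∈ Finset.Icc 1 m, 1 / (2 * (j : ℝ) - 1) - π / 12 := by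
        rw [sum_sub_distrib, ← mul_sum, ← sum_mul, sum_Icc_two_mul_sub_one]
        field_simp
    _ ≤ 4 / π * (log (m + 1) / 2 + (4 / 3 - log 2 / 2)) - π / 12 := by
        gcongr
        exact sum_inv_odd_le_log m
    _ = 2 / π * log (m + 1) + (4 / π * (4 / 3 - log 2 / 2) - π / 12) := by ring
    _ ≤ 2 / π * log (m + 1) + 1 := by linarith

end ChebyshevLagrangeBasis

section CotangentMajorant

variable {m : ℕ}

lemma periodic_sum_range_add_nsmul {α β : Type*} [AddCommMonoid α] [AddCommMonoid β] {f : α → β}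
    {c : α} {n : ℕ} (hf : Function.Periodic f (n • c)) :
    Function.Periodic (fun x ↦ ∑ k ∈ Finset.range n, f (x + k • c)) c := by
  intro x
  cases n with
  | zero => simp
  | succ n =>
    have hshift (k : ℕ) : x + c + k • c = x + (k + 1) • c := by
      rw [succ_nsmul', add_assoc]
    simp only [hshift]
    rw [sum_range_succ, sum_range_succ', hf x, zero_nsmul, add_zero]

/-- The majorant of the Lebesgue function `θ ↦ ∑ j, |lagBasis m j (cos θ)|` obtained by estimating
the two cotangents in `abs_lagBasis_cos` separately. -/
noncomputable def cotMajorant (m : ℕ) (θ : ℝ) : ℝ :=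
  |cos (m * θ)| / (2 * m) * ∑ j ∈ Finset.Icc 1 m,
    (|cot ((chebAngle m j - θ) / 2)| + |cot ((chebAngle m j + θ) / 2)|)

lemma sum_abs_lagBasis_cos_le_cotMajorant {θ : ℝ} (hθ : cos (m * θ) ≠ 0) :
    ∑ j ∈ Finset.Icc 1 m, |lagBasis m j (cos θ)| ≤ cotMajorant m θ := by
  rw [cotMajorant, mul_sum]
  refine sum_le_sum fun j hj ↦ ?_
  rw [abs_lagBasis_cos hj hθ]
  gcongr
  exact abs_add_le _ _

lemma cotMajorant_le_sum_abs_lagBasis_cos {φ : ℝ} (hφ : |φ| ≤ π / (2 * m)) :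
    cotMajorant m φ ≤ ∑ j ∈ Finset.Icc 1 m, |lagBasis m j (cos φ)| := by
  rcases eq_or_ne (cos (m * φ)) 0 with hcos | hcos
  · rw [cotMajorant, hcos, abs_zero, zero_div, zero_mul]
    positivity
  rw [cotMajorant, mul_sum]
  refine sum_le_sum fun j hj ↦ ?_
  obtain ⟨hneg, hpos⟩ := abs_le.mp hφ
  have hlo := pi_div_two_mul_le_chebAngle hj
  have hhi := chebAngle_le_pi_sub hj
  have hsub : 0 ≤ cot ((chebAngle m j - φ) / 2) :=
    cot_nonneg_of_mem_Icc ⟨by linarith, by linarith⟩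
  have hadd : 0 ≤ cot ((chebAngle m j + φ) / 2) :=
    cot_nonneg_of_mem_Icc ⟨by linarith, by linarith⟩
  rw [abs_lagBasis_cos hj hcos, abs_of_nonneg hsub, abs_of_nonneg hadd,
    abs_of_nonneg (add_nonneg hsub hadd)]

-- Modulo `2π` the angles `θ_j` and `-θ_j`, `1 ≤ j ≤ m`, are the `θ_k` with `1 ≤ k ≤ 2m`, because
-- `θ_{2m+1-j} = 2π - θ_j`.
lemma sum_abs_cot_eq_sum_range (hm : m ≠ 0) (θ : ℝ) :
    ∑ j ∈ Finset.Icc 1 m,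
        (|cot ((chebAngle m j - θ) / 2)| + |cot ((chebAngle m j + θ) / 2)|) =
      ∑ k ∈ Finset.range (2 * m), |cot ((π / (2 * m) + θ + k • (π / m)) / 2)| := by
  rw [two_mul m, sum_range_add,
    ← sum_range_reflect (fun k ↦ |cot ((π / (2 * m) + θ + (m + k) • (π / m)) / 2)|),
    ← sum_add_distrib,
    ← Finset.Ico_add_one_right_eq_Icc, sum_Ico_eq_sum_range, Nat.add_sub_cancel]
  refine sum_congr rfl fun k hk ↦ ?_
  have hk' : 1 + k ≤ m := by grind
  have hcast : ((m + (m - 1 - k) : ℕ) : ℝ) = 2 * m - 1 - k := by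
    rw [Nat.sub_sub]
    push_cast [hk']
    ring
  rw [add_comm, ← abs_neg (cot ((chebAngle m (1 + k) - θ) / 2)), ← cot_pi_sub]
  congr 3
  · rw [chebAngle, nsmul_eq_mul]
    push_cast
    field_simp
    ring
  · rw [chebAngle, nsmul_eq_mul, hcast]
    push_cast
    field_simp
    ring

lemma cotMajorant_periodic (hm : m ≠ 0) : Function.Periodic (cotMajorant m) (π / m) := by
  have hm' : (m : ℝ) ≠ 0 := mod_cast hm
  have hcos (θ : ℝ) : |cos (m * (θ + π / m))| = |cos (m * θ)| := by
    rw [mul_add, mul_div_cancel₀ _ hm', cos_add_pi, abs_neg]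
  have hcot : Function.Periodic (fun y ↦ |cot (y / 2)|) ((2 * m) • (π / m)) := by
    intro y
    have hy : (y + (2 * m) • (π / m)) / 2 = y / 2 + π := by
      rw [nsmul_eq_mul]
      push_cast
      field_simp
    beta_reduce
    rw [hy, cot_add_pi]
  intro θ
  have hsum := periodic_sum_range_add_nsmul hcot (π / (2 * m) + θ)
  beta_reduce at hsum
  rw [cotMajorant, cotMajorant, hcos, sum_abs_cot_eq_sum_range hm, sum_abs_cot_eq_sum_range hm,
    ← add_assoc, hsum]

lemma exists_abs_le_cotMajorant_eq (hm : m ≠ 0) (θ : ℝ) :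
    ∃ φ, |φ| ≤ π / (2 * m) ∧ cotMajorant m θ = cotMajorant m φ := by
  obtain ⟨φ, ⟨hlo, hhi⟩, hφ⟩ :=
    (cotMajorant_periodic hm).exists_mem_Ioc (by positivity) θ (-(π / (2 * m)))
  have hend : -(π / (2 * m)) + π / m = π / (2 * m) := by
    field_simp
    ring
  exact ⟨φ, abs_le.mpr ⟨hlo.le, hhi.trans_eq hend⟩, hφ⟩

end CotangentMajorant

/-- Lebesgue constant bound for the Chebyshev–Gauss nodes:
`max_{x∈[−1,1]} Σ_{j=1}^m |𝓛_j(x)| ≤ (2/π) ln(m+1) + 1`. -/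
theorem lebesgue_constant_chebyshev_bound (m : ℕ) (hm : 1 ≤ m) :
    ∀ x ∈ Set.Icc (-1 : ℝ) 1,
      ∑ j ∈ Finset.Icc 1 m, |lagBasis m j x| ≤ (2 / Real.pi) * Real.log (m + 1) + 1 := by
  intro x hx
  have hm0 : m ≠ 0 := Nat.one_le_iff_ne_zero.mp hm
  obtain ⟨θ, rfl⟩ : ∃ θ, cos θ = x := ⟨arccos x, cos_arccos hx.1 hx.2⟩
  rcases eq_or_ne (cos (m * θ)) 0 with hθ | hθ
  · obtain ⟨k, hk, hnode⟩ := exists_cos_eq_chebNode hθ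
    rw [hnode, sum_abs_lagBasis_chebNode hk]
    have hlog : 0 ≤ log (m + 1 : ℝ) := log_nonneg (by simp)
    linarith [mul_nonneg (div_nonneg zero_le_two pi_pos.le) hlog]
  · obtain ⟨φ, hφ, hθφ⟩ := exists_abs_le_cotMajorant_eq hm0 θ
    calc ∑ j ∈ Finset.Icc 1 m, |lagBasis m j (cos θ)|
        ≤ cotMajorant m θ := sum_abs_lagBasis_cos_le_cotMajorant hθ
      _ = cotMajorant m φ := hθφ
      _ ≤ ∑ j ∈ Finset.Icc 1 m, |lagBasis m j (cos φ)| := cotMajorant_le_sum_abs_lagBasis_cos hφ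
      _ ≤ ∑ j ∈ Finset.Icc 1 m, |lagBasis m j 1| :=
        sum_le_sum fun j _ ↦
          abs_lagBasis_le_abs_lagBasis (fun _ ↦ chebNode_le_cos hφ) (cos_le_one φ) j
      _ ≤ 2 / π * log (m + 1) + 1 := sum_abs_lagBasis_one_le hm0
end
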